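/- Let X be an ACM set of distinct points in P^m × P^n. Then: (a) ϑ_{X_1}R_X · ϑ_{X_2}R_X ⊆ ϑ_X, where ϑ_{X_1}R_X and ϑ_{X_2}R_X denote the extensions of the Kähler differents of X_1 and X_2 to R_X; (b) ϑ_X contains a bihomogeneous non-zerodivisor of R_X. -/

import Mathlib

/- Common setup: finite sets of points in the multiprojective space
   `P^m x P^n` over a field `K` of characteristic zero, their bihomogeneous
   vanishing ideals, bigraded Hilbert functions, Kähler differents,
   separators, Cayley-Bacharach property and complete intersections. -/

open MvPolynomial

set_option maxHeartbeats 1000000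
set_option synthInstance.maxHeartbeats 400000

noncomputable section

namespace MultiProjPoints

variable (K : Type) [Field K] [CharZero K] [DecidableEq K]

/-- The bigraded coordinate ring `S = K[X_0,…,X_m,Y_0,…,Y_n]` of `P^m × P^n`. -/
abbrev BiRing (m n : ℕ) : Type := MvPolynomial (Fin (m+1) ⊕ Fin (n+1)) K

/-- The weights giving the bigrading: `deg X_i = (1,0)`, `deg Y_j = (0,1)`. -/
def biwt (m n : ℕ) : (Fin (m+1) ⊕ Fin (n+1)) → ℤ × ℤ :=
  Sum.elim (fun _ => ((1 : ℤ), (0 : ℤ))) (fun _ => ((0 : ℤ), (1 : ℤ)))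

variable {m n : ℕ}

/-- A (representative of a) point of `P^m × P^n`. -/
abbrev BiPt (m n : ℕ) : Type := (Fin (m+1) → K) × (Fin (n+1) → K)

/-- `F` is bihomogeneous of degree `d`. -/
def IsBihom (F : BiRing K m n) (d : ℤ × ℤ) : Prop :=
  IsWeightedHomogeneous (biwt m n) F d

/-- Evaluation of a polynomial at (a representative of) a point. -/
def evalB (p : BiPt K m n) (F : BiRing K m n) : K :=
  eval (Sum.elim p.1 p.2) F

/-- A finset of representatives is a good configuration of points of
`P^m × P^n`: all representatives are nonzero, and proportional
representatives coincide (so distinct elements are distinct projective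
points, and images under the two projections behave correctly). -/
def GoodConfig (𝕏 : Finset (BiPt K m n)) : Prop :=
  (∀ p ∈ 𝕏, p.1 ≠ 0 ∧ p.2 ≠ 0) ∧
  (∀ p ∈ 𝕏, ∀ q ∈ 𝕏, (∃ c : K, c ≠ 0 ∧ p.1 = c • q.1) → p.1 = q.1) ∧
  (∀ p ∈ 𝕏, ∀ q ∈ 𝕏, (∃ c : K, c ≠ 0 ∧ p.2 = c • q.2) → p.2 = q.2)

/-- The bihomogeneous vanishing ideal `I_𝕏` of a set of points. -/
def vIdealB (𝕏 : Finset (BiPt K m n)) : Ideal (BiRing K m n) :=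
  Ideal.span {F | (∃ d, IsBihom K F d) ∧ ∀ p ∈ 𝕏, evalB K p F = 0}

/-- The bihomogeneous vanishing ideal of a single point. -/
def ptIdealB (p : BiPt K m n) : Ideal (BiRing K m n) :=
  Ideal.span {F | (∃ d, IsBihom K F d) ∧ evalB K p F = 0}

/-- The degree-`d` piece of `S/I`. -/
def degPieceB (I : Ideal (BiRing K m n)) (d : ℤ × ℤ) :
    Submodule K (BiRing K m n ⧸ I) :=
  (weightedHomogeneousSubmodule K (biwt m n) d).map
    (Ideal.Quotient.mkₐ K I).toLinearMap

/-- The Hilbert function of `S/I`. -/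
def HFI (I : Ideal (BiRing K m n)) (d : ℤ × ℤ) : ℕ :=
  Module.finrank K (degPieceB K I d)

/-- The Hilbert function of a set of points in `P^m × P^n`. -/
def HFB (𝕏 : Finset (BiPt K m n)) (d : ℤ × ℤ) : ℕ :=
  HFI K (vIdealB K 𝕏) d

/-- The Hilbert function of a (bihomogeneous) ideal `J` of `R_𝕏 = S/I`. -/
def HFIdealB (I : Ideal (BiRing K m n)) (J : Ideal (BiRing K m n ⧸ I))
    (d : ℤ × ℤ) : ℕ :=
  Module.finrank K ↥((Submodule.restrictScalars K J) ⊓ degPieceB K I d)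

/- ### Single projective space `P^N` -/

/-- The coordinate ring `K[X_0,…,X_N]` of `P^N`. -/
abbrev PRing (N : ℕ) : Type := MvPolynomial (Fin (N+1)) K

/-- The standard grading on `K[X_0,…,X_N]` (with values in `ℤ`). -/
def wt1 (N : ℕ) : Fin (N+1) → ℤ := fun _ => 1

/-- `F` is homogeneous of degree `d`. -/
def IsHom1 {N : ℕ} (F : PRing K N) (d : ℤ) : Prop :=
  IsWeightedHomogeneous (wt1 N) F d

/-- A good finite set of representatives of points in `P^N`. -/
def GoodSet {N : ℕ} (Y : Finset (Fin (N+1) → K)) : Prop :=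
  (∀ q ∈ Y, q ≠ 0) ∧
  (∀ p ∈ Y, ∀ q ∈ Y, (∃ c : K, c ≠ 0 ∧ p = c • q) → p = q)

/-- The homogeneous vanishing ideal of a set of points in `P^N`. -/
def vIdeal1 {N : ℕ} (Y : Finset (Fin (N+1) → K)) : Ideal (PRing K N) :=
  Ideal.span {F | (∃ d, IsHom1 K F d) ∧ ∀ q ∈ Y, eval q F = 0}

/-- The degree-`d` piece of `K[X_0,…,X_N]/I`. -/
def degPiece1 {N : ℕ} (I : Ideal (PRing K N)) (d : ℤ) :
    Submodule K (PRing K N ⧸ I) :=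
  (weightedHomogeneousSubmodule K (wt1 N) d).map
    (Ideal.Quotient.mkₐ K I).toLinearMap

/-- The Hilbert function of a set of points in `P^N`. -/
def HF1 {N : ℕ} (Y : Finset (Fin (N+1) → K)) (d : ℤ) : ℕ :=
  Module.finrank K (degPiece1 K (vIdeal1 K Y) d)

/-- The Hilbert function of a homogeneous ideal of `K[X_0,…,X_N]/I`. -/
def HFIdeal1 {N : ℕ} (I : Ideal (PRing K N)) (J : Ideal (PRing K N ⧸ I))
    (d : ℤ) : ℕ :=
  Module.finrank K ↥((Submodule.restrictScalars K J) ⊓ degPiece1 K I d)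

/-- The degree `deg_Y(q)` of a point `q` in `Y ⊆ P^N`: the minimal degree of
a homogeneous separator of `q` in `Y`. -/
def deg1 {N : ℕ} (Y : Finset (Fin (N+1) → K)) (q : Fin (N+1) → K) : ℕ :=
  sInf {d : ℕ | ∃ F : PRing K N, IsHom1 K F (d : ℤ) ∧ eval q F ≠ 0 ∧
    ∀ q' ∈ Y, q' ≠ q → eval q' F = 0}

/-- The regularity index of the Hilbert function of `Y ⊆ P^N`. -/
def regIndex1 {N : ℕ} (Y : Finset (Fin (N+1) → K)) : ℕ :=
  sInf {r : ℕ | ∀ i : ℕ, r ≤ i → HF1 K Y (i : ℤ) = Y.card}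

/-- `Y ⊆ P^N` is a Cayley-Bacharach scheme. -/
def IsCB1 {N : ℕ} (Y : Finset (Fin (N+1) → K)) : Prop :=
  ∀ q ∈ Y, deg1 K Y q = regIndex1 K Y

/- ### Kähler differents -/

/-- The variables `X_1,…,X_m,Y_1,…,Y_n` indexed by `Fin (m+n)`. -/
def bvar (m n : ℕ) (v : Fin (m+n)) : Fin (m+1) ⊕ Fin (n+1) :=
  if h : (v : ℕ) < m then Sum.inl ⟨(v : ℕ) + 1, by omega⟩
  else Sum.inr ⟨(v : ℕ) - m + 1, by have hv := v.isLt; omega⟩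

/-- The Kähler different of `R = S/I` w.r.t. a system of generators `F` of
`I`: the ideal generated by the `(m+n)×(m+n)`-minors of the Jacobian matrix
`(∂F_k/∂X_i, ∂F_k/∂Y_j)`. -/
def kdiffB (I : Ideal (BiRing K m n)) {r : ℕ} (F : Fin r → BiRing K m n) :
    Ideal (BiRing K m n ⧸ I) :=
  Ideal.span (Set.range fun ρ : Fin (m+n) → Fin r =>
    Ideal.Quotient.mk I (Matrix.det (Matrix.of fun u v : Fin (m+n) =>
      pderiv (bvar m n v) (F (ρ u)))))

/-- The Kähler different of `K[X_0,…,X_N]/I` w.r.t. a system of generators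
`F` of `I` (minors w.r.t. the variables `X_1,…,X_N`). -/
def kdiff1 {N : ℕ} (I : Ideal (PRing K N)) {r : ℕ} (F : Fin r → PRing K N) :
    Ideal (PRing K N ⧸ I) :=
  Ideal.span (Set.range fun ρ : Fin N → Fin r =>
    Ideal.Quotient.mk I (Matrix.det (Matrix.of fun u v : Fin N =>
      pderiv (Fin.succ v) (F (ρ u)))))

/-- The extension `ϑ_{𝕏₁} R_𝕏` to `R_𝕏 = S/I` of the Kähler different of
`𝕏₁ ⊆ P^m` computed from a system of generators `F` of `I_{𝕏₁}`. -/
def kdiffExtL (I : Ideal (BiRing K m n)) {r : ℕ} (F : Fin r → PRing K m) :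
    Ideal (BiRing K m n ⧸ I) :=
  Ideal.span (Set.range fun ρ : Fin m → Fin r =>
    Ideal.Quotient.mk I (rename Sum.inl (Matrix.det (Matrix.of fun u v : Fin m =>
      pderiv (Fin.succ v) (F (ρ u))))))

/-- The extension `ϑ_{𝕏₂} R_𝕏` to `R_𝕏 = S/I` of the Kähler different of
`𝕏₂ ⊆ P^n` computed from a system of generators `G` of `I_{𝕏₂}`. -/
def kdiffExtR (I : Ideal (BiRing K m n)) {r : ℕ} (G : Fin r → PRing K n) :
    Ideal (BiRing K m n ⧸ I) :=
  Ideal.span (Set.range fun ρ : Fin n → Fin r =>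
    Ideal.Quotient.mk I (rename Sum.inr (Matrix.det (Matrix.of fun u v : Fin n =>
      pderiv (Fin.succ v) (G (ρ u))))))

/- ### Regular sequences, ACM, complete intersections -/

/-- `a, b` form a regular sequence. -/
def RegPair {A : Type*} [CommRing A] (a b : A) : Prop :=
  (∀ z : A, a * z = 0 → z = 0) ∧
  (∀ z : A, b * z ∈ Ideal.span {a} → z ∈ Ideal.span {a})

/-- The image `x₀` of `X_0` in `S/I`. -/
def x0B (I : Ideal (BiRing K m n)) : BiRing K m n ⧸ I :=
  Ideal.Quotient.mk I (MvPolynomial.X (Sum.inl 0))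

/-- The image `y₀` of `Y_0` in `S/I`. -/
def y0B (I : Ideal (BiRing K m n)) : BiRing K m n ⧸ I :=
  Ideal.Quotient.mk I (MvPolynomial.X (Sum.inr 0))

/-- The standing assumption for ACM sets of points: (after a change of
coordinates) `x₀, y₀` form a regular sequence in `R_𝕏`. -/
def ACMxy (𝕏 : Finset (BiPt K m n)) : Prop :=
  RegPair (x0B K (vIdealB K 𝕏)) (y0B K (vIdealB K 𝕏))

/-- `𝕏` is arithmetically Cohen-Macaulay: some bihomogeneous linear forms
`ℓ` of degree `(1,0)` and `ℓ'` of degree `(0,1)` give a regular sequence in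
`R_𝕏` (for points this is equivalent to `depth R_𝕏 = 2`). -/
def IsACM (𝕏 : Finset (BiPt K m n)) : Prop :=
  ∃ l l' : BiRing K m n, IsBihom K l (1, 0) ∧ IsBihom K l' (0, 1) ∧
    RegPair (Ideal.Quotient.mk (vIdealB K 𝕏) l) (Ideal.Quotient.mk (vIdealB K 𝕏) l')

/-- A regular sequence in a commutative ring, given as a list:
each entry is a non-zerodivisor modulo the preceding ones, and the list
generates a proper ideal. -/
def IsRegSeq {A : Type*} [CommRing A] (l : List A) : Prop :=
  (∀ (i : ℕ) (h : i < l.length), ∀ z : A,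
      l.get ⟨i, h⟩ * z ∈ Ideal.span {x | x ∈ l.take i} →
      z ∈ Ideal.span {x | x ∈ l.take i}) ∧
  Ideal.span {x | x ∈ l} ≠ ⊤

/-- `𝕏` is a complete intersection of type `(d_1,…,d_m,d'_1,…,d'_n)`. -/
def IsCIB (𝕏 : Finset (BiPt K m n)) (d : Fin m → ℕ) (d' : Fin n → ℕ) : Prop :=
  ∃ (F : Fin m → BiRing K m n) (G : Fin n → BiRing K m n),
    (∀ i, IsBihom K (F i) ((d i : ℤ), 0)) ∧
    (∀ j, IsBihom K (G j) (0, (d' j : ℤ))) ∧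
    IsRegSeq (List.ofFn F ++ List.ofFn G) ∧
    Ideal.span (Set.range F ∪ Set.range G) = vIdealB K 𝕏

/-- `Y ⊆ P^N` is a complete intersection of type `(d_1,…,d_N)`. -/
def IsCI1 {N : ℕ} (Y : Finset (Fin (N+1) → K)) (d : Fin N → ℕ) : Prop :=
  ∃ F : Fin N → PRing K N,
    (∀ i, IsHom1 K (F i) (d i : ℤ)) ∧
    IsRegSeq (List.ofFn F) ∧
    Ideal.span (Set.range F) = vIdeal1 K Y

/- ### Separators and the Cayley-Bacharach property -/

/-- `F` is a separator of `p` in `𝕏`. -/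
def IsSepB (𝕏 : Finset (BiPt K m n)) (p : BiPt K m n) (F : BiRing K m n) : Prop :=
  evalB K p F ≠ 0 ∧ ∀ q ∈ 𝕏, q ≠ p → evalB K q F = 0

/-- The set of degrees of bihomogeneous separators of `p` in `𝕏`. -/
def sepDegsB (𝕏 : Finset (BiPt K m n)) (p : BiPt K m n) : Set (ℤ × ℤ) :=
  {d | ∃ F, IsBihom K F d ∧ IsSepB K 𝕏 p F}

/-- `deg_𝕏(p)`: the set of degrees of minimal separators of `p` in `𝕏`
(mimimality w.r.t. the componentwise order). -/
def minSepDegsB (𝕏 : Finset (BiPt K m n)) (p : BiPt K m n) : Set (ℤ × ℤ) :=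
  {d ∈ sepDegsB K 𝕏 p | ∀ d' ∈ sepDegsB K 𝕏 p, ¬ d' < d}

/-- `𝕏` has the Cayley-Bacharach property: the Hilbert function of
`𝕏 \ {p}` is independent of the choice of `p ∈ 𝕏`. -/
def HasCB (𝕏 : Finset (BiPt K m n)) : Prop :=
  ∀ p ∈ 𝕏, ∀ q ∈ 𝕏, ∀ d : ℤ × ℤ, HFB K (𝕏.erase p) d = HFB K (𝕏.erase q) d

/- ### Star property and fibres -/

/-- The `(⋆)`-property. -/
def StarProp (𝕏 : Finset (BiPt K m n)) : Prop :=
  ∀ p ∈ 𝕏, ∀ q ∈ 𝕏, ((p.1, q.2) ∈ 𝕏 ∨ (q.1, p.2) ∈ 𝕏)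

/-- `V_j = π₁(π₂⁻¹(q'_j) ∩ 𝕏)` for `q'_j = p.2`. -/
def Vset (𝕏 : Finset (BiPt K m n)) (p : BiPt K m n) : Finset (Fin (m+1) → K) :=
  (𝕏.filter fun q => q.2 = p.2).image Prod.fst

/-- `W_i = π₂(π₁⁻¹(q_i) ∩ 𝕏)` for `q_i = p.1`. -/
def Wset (𝕏 : Finset (BiPt K m n)) (p : BiPt K m n) : Finset (Fin (n+1) → K) :=
  (𝕏.filter fun q => q.1 = p.1).image Prod.snd

end MultiProjPoints

/- Multiplying the linear forms that cut out a point `p` by the square of a separator `f` of `p`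
gives elements of `I_𝕏` whose Jacobian matrix, modulo `I_𝕏`, is diagonal with entries
`x₀(p) f²` or `y₀(p) f²`. A bihomogeneous element of `R_𝕏` killed by `y₀` is divisible by
every power of `x₀`, hence zero for degree reasons; so `x₀` and `y₀` are both non-zerodivisors, they
vanish at no point of `𝕏`, and a power of `f` lies in the different. Summing these powers over all
points, with separators of one common degree, gives a bihomogeneous form that vanishes nowhere on
`𝕏`, that is, a non-zerodivisor of `R_𝕏`. The inclusion of the product of differents holds because
forms in the `X_i` and forms in the `Y_j` have a block diagonal Jacobian matrix. -/

namespace MultiProjPoints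

section Jacobian

variable {ι κ R A B : Type*} [CommRing R] [CommRing A] [Algebra R A]

/-- The Jacobian matrix of a family `f` of ring elements with respect to a family `D` of
derivations; the elements index the rows and the derivations the columns. -/
def jacobian (D : ι → Derivation R A A) (f : κ → A) : Matrix κ ι A :=
  Matrix.of fun k v => D v (f k)

variable [Fintype ι] [DecidableEq ι]

lemma det_mul_mem_span_det_submatrix [Fintype κ] (C : Matrix ι κ R) (N : Matrix κ ι R) :
    (C * N).det ∈ Ideal.span (Set.range fun ρ : ι → κ => (N.submatrix ρ id).det) := by
  have rows : C * N = fun u => ∑ k, C u k • N k := by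
    ext u v
    simp [Matrix.mul_apply]
  have expansion : (C * N).det = ∑ ρ : ι → κ, (∏ u, C u (ρ u)) * (N.submatrix ρ id).det := by
    rw [rows]
    exact (Matrix.detRowAlternating.toMultilinearMap.map_sum _).trans
      (Finset.sum_congr rfl fun ρ _ => MultilinearMap.map_smul_univ _ _ _)
  rw [expansion]
  exact Ideal.sum_mem _ fun ρ _ => Ideal.mul_mem_left _ _ (Ideal.subset_span ⟨ρ, rfl⟩)

lemma map_det_jacobian_mem_span [Finite κ] [CommRing B] (D : ι → Derivation R A A) (π : A →+* B)
    {F : κ → A} (hF : ∀ k, π (F k) = 0) {P : ι → A} (hP : ∀ u, P u ∈ Ideal.span (Set.range F)) :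
    π (jacobian D P).det ∈
      Ideal.span (Set.range fun ρ : ι → κ => π (jacobian D (F ∘ ρ)).det) := by
  cases nonempty_fintype κ
  choose c hc using fun u => Ideal.mem_span_range_iff_exists_fun.mp (hP u)
  have factorization :
      π.mapMatrix (jacobian D P) = (Matrix.of c).map π * (jacobian D F).map π := by
    ext u v
    simp [jacobian, ← hc u, Matrix.mul_apply, hF]
  have minors (ρ : ι → κ) :
      π.mapMatrix (jacobian D (F ∘ ρ)) = ((jacobian D F).map π).submatrix ρ id := rfl
  simp only [RingHom.map_det, factorization, minors]
  exact det_mul_mem_span_det_submatrix _ _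

lemma mk_derivation_mul_sq (D : Derivation R A A) {I : Ideal A} {l f : A} (h : l * f ∈ I) :
    Ideal.Quotient.mk I (D (l * f ^ 2)) =
      Ideal.Quotient.mk I (D l) * Ideal.Quotient.mk I f ^ 2 := by
  have hlf : Ideal.Quotient.mk I l * Ideal.Quotient.mk I f = 0 := by
    rw [← map_mul, Ideal.Quotient.eq_zero_iff_mem.mpr h]
  simp only [Derivation.leibniz, Derivation.leibniz_pow, smul_eq_mul, nsmul_eq_mul, map_add,
    map_mul, map_pow, map_natCast]
  push_cast
  linear_combination (2 * Ideal.Quotient.mk I (D f)) * hlf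

end Jacobian

section PolynomialJacobian

variable {ι κ σ τ R : Type*} [CommRing R]

lemma pderiv_rename_of_notMem_range {g : σ → τ} {t : τ} (ht : t ∉ Set.range g)
    (f : MvPolynomial σ R) : pderiv t (rename g f) = 0 := by
  classical
  refine pderiv_eq_zero_of_notMem_vars fun h => ht ?_
  obtain ⟨s, -, hs⟩ := Finset.mem_image.mp (vars_rename g f h)
  exact ⟨s, hs⟩

lemma det_jacobian_sumElim_rename [Fintype ι] [DecidableEq ι] [Fintype κ] [DecidableEq κ]
    (x : ι → σ) (y : κ → τ) (F : ι → MvPolynomial σ R) (G : κ → MvPolynomial τ R) :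
    (jacobian (fun v => pderiv (Sum.map x y v))
      (Sum.elim (fun i => rename Sum.inl (F i)) fun j => rename Sum.inr (G j))).det =
      rename Sum.inl (jacobian (fun v => pderiv (x v)) F).det *
        rename Sum.inr (jacobian (fun v => pderiv (y v)) G).det := by
  rw [AlgHom.map_det, AlgHom.map_det, ← Matrix.det_fromBlocks_zero₂₁ _ 0]
  congr 1
  ext1 (u | u) (v | v) <;>
    simp [jacobian, pderiv_rename_of_notMem_range, pderiv_rename Sum.inl_injective,
      pderiv_rename Sum.inr_injective]

/-- The linear form `p_t X_s - p_s X_t`, a `2 × 2` minor of the matrix with rows `p` and `X`; these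
forms cut out the point with homogeneous coordinates `p`. -/
def pointMinor (p : σ → R) (s t : σ) : MvPolynomial σ R :=
  C (p t) * X s - C (p s) * X t

@[simp]
lemma eval_pointMinor (p q : σ → R) (s t : σ) :
    eval q (pointMinor p s t) = p t * q s - p s * q t := by
  simp [pointMinor]

lemma exists_eval_pointMinor_ne_zero {K : Type*} [Field K] {p q : σ → K} (hp : p ≠ 0)
    (hq : q ≠ 0) (hpq : ¬∃ c : K, c ≠ 0 ∧ p = c • q) :
    ∃ s t, eval p (pointMinor q s t) ≠ 0 := by
  by_contra! vanishing
  obtain ⟨t, ht⟩ := Function.ne_iff.mp hq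
  have proportional : p = (p t / q t) • q := by
    ext s
    rw [Pi.smul_apply, smul_eq_mul, div_mul_eq_mul_div, eq_div_iff ht]
    linear_combination (eval_pointMinor q p s t).symm.trans (vanishing s t)
  refine hpq ⟨p t / q t, fun h0 => hp ?_, proportional⟩
  rw [proportional, h0, zero_smul]

lemma pderiv_pointMinor [DecidableEq ι] {v b : ι → σ} (hv : Function.Injective v)
    (hvb : ∀ i j, b i ≠ v j) (p : σ → R) (i j : ι) :
    pderiv (v j) (pointMinor p (v i) (b i)) = if i = j then C (p (b i)) else 0 := by
  simp only [pointMinor, map_sub, pderiv_C_mul, pderiv_X_of_ne (hvb i j), mul_zero, sub_zero]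
  split_ifs with hij
  · rw [hij, pderiv_X_self, mul_one]
  · rw [pderiv_X_of_ne (hv.ne hij), mul_zero]

lemma mk_det_jacobian_pointMinor_mul_sq [Fintype ι] [DecidableEq ι]
    {I : Ideal (MvPolynomial σ R)} {v b : ι → σ} (hv : Function.Injective v)
    (hvb : ∀ i j, b i ≠ v j) {p : σ → R} {f : MvPolynomial σ R}
    (hf : ∀ i, pointMinor p (v i) (b i) * f ∈ I) :
    Ideal.Quotient.mk I
        (jacobian (fun j => pderiv (v j)) fun i => pointMinor p (v i) (b i) * f ^ 2).det =
      Ideal.Quotient.mk I (C (∏ i, p (b i)) * f ^ (2 * Fintype.card ι)) := by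
  have diagonal : (Ideal.Quotient.mk I).mapMatrix
      (jacobian (fun j => pderiv (v j)) fun i => pointMinor p (v i) (b i) * f ^ 2) =
      Matrix.diagonal fun i => Ideal.Quotient.mk I (C (p (b i)) * f ^ 2) := by
    ext i j
    simp only [jacobian, RingHom.mapMatrix_apply, Matrix.map_apply, Matrix.of_apply,
      mk_derivation_mul_sq _ (hf i), pderiv_pointMinor hv hvb, Matrix.diagonal_apply]
    split_ifs <;> simp
  rw [RingHom.map_det, diagonal, Matrix.det_diagonal, ← map_prod, Finset.prod_mul_distrib,
    Finset.prod_const, Finset.card_univ, ← pow_mul, ← map_prod]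

end PolynomialJacobian

section WeightedHomogeneous

variable {σ τ R M N : Type*} [CommRing R] [AddCommGroup M] [AddCommGroup N] {w : σ → M}

lemma isWeightedHomogeneous_rename {w' : τ → N} {g : σ → τ} (φ : M →+ N)
    (hg : ∀ s, w' (g s) = φ (w s)) {f : MvPolynomial σ R} {d : M}
    (hf : IsWeightedHomogeneous w f d) : IsWeightedHomogeneous w' (rename g f) (φ d) := by
  intro e he
  obtain ⟨u, rfl, hu⟩ := coeff_rename_ne_zero g f e he
  rw [← hf hu, Finsupp.weight_apply, Finsupp.weight_apply, map_finsuppSum,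
    Finsupp.sum_mapDomain_index (h := fun t c => c • w' t) (fun _ => zero_nsmul _)
      fun _ _ _ => add_nsmul _ _ _]
  simp only [hg, map_nsmul]

lemma isWeightedHomogeneous_pointMinor {s t : σ} (hst : w t = w s) (p : σ → R) :
    IsWeightedHomogeneous w (pointMinor p s t) (w s) :=
  ((isWeightedHomogeneous_X R w s).C_mul _).sub (hst ▸ (isWeightedHomogeneous_X R w t).C_mul _)

lemma eq_zero_of_isWeightedHomogeneous_of_neg {φ : M →+ ℤ} (hw : ∀ s, 0 ≤ φ (w s)) {d : M}
    (hd : φ d < 0) {f : MvPolynomial σ R} (hf : IsWeightedHomogeneous w f d) : f = 0 := by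
  by_contra hne
  obtain ⟨u, hu⟩ := exists_coeff_ne_zero hne
  have nonneg : 0 ≤ φ d := by
    rw [← hf hu, Finsupp.weight_apply, map_finsuppSum]
    exact Finset.sum_nonneg fun s _ => (nsmul_nonneg (hw s) _).trans_eq (map_nsmul φ _ _).symm
  exact hd.not_ge nonneg

lemma weightedHomogeneousComponent_add_mul {f : MvPolynomial σ R} {e : M}
    (hf : IsWeightedHomogeneous w f e) (d : M) (g : MvPolynomial σ R) :
    weightedHomogeneousComponent w (e + d) (f * g) = f * weightedHomogeneousComponent w d g := by
  classical
  let _ := weightedGradedAlgebra R w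
  rw [← weightedDecomposition.decompose'_apply, ← weightedDecomposition.decompose'_apply]
  exact DirectSum.coe_decompose_mul_add_of_left_mem (weightedHomogeneousSubmodule R w) hf

variable [DecidableEq M] {I : Ideal (MvPolynomial σ R)}

attribute [local instance] MvPolynomial.weightedGradedAlgebra

lemma mk_mem_nonZeroDivisors_of_isHomogeneous
    (hI : I.IsHomogeneous (weightedHomogeneousSubmodule R w)) {g : MvPolynomial σ R} {e : M}
    (hg : IsWeightedHomogeneous w g e)
    (h : ∀ d f, IsWeightedHomogeneous w f d → g * f ∈ I → f ∈ I) :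
    Ideal.Quotient.mk I g ∈ nonZeroDivisors (MvPolynomial σ R ⧸ I) := by
  refine mem_nonZeroDivisors_iff_left.mpr fun z hz => ?_
  obtain ⟨q, rfl⟩ := Ideal.Quotient.mk_surjective z
  rw [← map_mul, Ideal.Quotient.eq_zero_iff_mem] at hz
  rw [Ideal.Quotient.eq_zero_iff_mem, mem_iff_weightedHomogeneousComponent_mem R w hI]
  refine fun d => h d _ (weightedHomogeneousComponent_isWeightedHomogeneous d q) ?_
  rw [← weightedHomogeneousComponent_add_mul hg]
  exact weightedHomogeneousComponent_mem_of_mem R w hI hz (e + d)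

lemma exists_isWeightedHomogeneous_mk_eq_mul
    (hI : I.IsHomogeneous (weightedHomogeneousSubmodule R w)) {f g : MvPolynomial σ R} {c e : M}
    (hf : IsWeightedHomogeneous w f (e + c)) (hg : IsWeightedHomogeneous w g e)
    (hgf : Ideal.Quotient.mk I g ∣ Ideal.Quotient.mk I f) :
    ∃ h, IsWeightedHomogeneous w h c ∧
      Ideal.Quotient.mk I f = Ideal.Quotient.mk I g * Ideal.Quotient.mk I h := by
  obtain ⟨q, hq⟩ := hgf
  obtain ⟨q, rfl⟩ := Ideal.Quotient.mk_surjective q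
  rw [← map_mul, Ideal.Quotient.eq] at hq
  have component_mem := weightedHomogeneousComponent_mem_of_mem R w hI hq (e + c)
  rw [map_sub, weightedHomogeneousComponent_eq_self hf,
    weightedHomogeneousComponent_add_mul hg] at component_mem
  exact ⟨_, weightedHomogeneousComponent_isWeightedHomogeneous c q,
    by rw [← map_mul, Ideal.Quotient.eq]; exact component_mem⟩

lemma RegPair.pow_dvd_of_mul_eq_zero {A : Type*} [CommRing A] {a b z : A} (hab : RegPair a b)
    (hz : b * z = 0) (k : ℕ) : a ^ k ∣ z := by
  suffices ∃ y, z = a ^ k * y ∧ b * y = 0 from this.imp fun _ h => h.1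
  induction k with
  | zero => exact ⟨z, by simp, hz⟩
  | succ k ih =>
    obtain ⟨y, rfl, hy⟩ := ih
    obtain ⟨y', rfl⟩ := Ideal.mem_span_singleton'.mp (hab.2 y (hy ▸ Ideal.zero_mem _))
    exact ⟨y', by ring, hab.1 _ (by rw [← hy]; ring)⟩

lemma RegPair.mk_mem_nonZeroDivisors (hI : I.IsHomogeneous (weightedHomogeneousSubmodule R w))
    {a b : MvPolynomial σ R} {e e' : M} (ha : IsWeightedHomogeneous w a e)
    (hb : IsWeightedHomogeneous w b e')
    (hab : RegPair (Ideal.Quotient.mk I a) (Ideal.Quotient.mk I b))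
    {φ : M →+ ℤ} (hw : ∀ s, 0 ≤ φ (w s)) (he : 0 < φ e) :
    Ideal.Quotient.mk I b ∈ nonZeroDivisors (MvPolynomial σ R ⧸ I) := by
  refine mk_mem_nonZeroDivisors_of_isHomogeneous hI hb fun d f hf hbf => ?_
  obtain ⟨k, hk⟩ : ∃ k : ℕ, φ (d - k • e) < 0 := by
    refine ⟨(φ d).toNat + 1, ?_⟩
    rw [map_sub, map_nsmul, nsmul_eq_mul]
    push_cast
    nlinarith [(φ d).self_le_toNat]
  have hdvd : Ideal.Quotient.mk I (a ^ k) ∣ Ideal.Quotient.mk I f := by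
    rw [map_pow]
    exact hab.pow_dvd_of_mul_eq_zero (by rwa [← map_mul, Ideal.Quotient.eq_zero_iff_mem]) k
  obtain ⟨h, hh, hfh⟩ := exists_isWeightedHomogeneous_mk_eq_mul hI
    (c := d - k • e) (by rwa [add_sub_cancel]) (ha.pow k) hdvd
  rwa [eq_zero_of_isWeightedHomogeneous_of_neg hw hk hh, map_zero, mul_zero,
    Ideal.Quotient.eq_zero_iff_mem] at hfh

end WeightedHomogeneous

section VanishingIdeal

variable {α β σ τ R M N : Type*} [CommRing R] [AddCommGroup M] [AddCommGroup N]

/-- The ideal generated by the `w`-homogeneous polynomials that vanish at all points `P a`. Both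
`vIdealB` and `vIdeal1` are of this form. -/
def weightedVanishingIdeal (w : σ → M) (P : α → σ → R) : Ideal (MvPolynomial σ R) :=
  Ideal.span {f | (∃ d, IsWeightedHomogeneous w f d) ∧ ∀ a, eval (P a) f = 0}

/-- `f` is a separator of the point `P a`: among the points of the family `P` it vanishes exactly
away from `P a`. -/
def IsSeparator (P : α → σ → R) (a : α) (f : MvPolynomial σ R) : Prop :=
  eval (P a) f ≠ 0 ∧ ∀ b, b ≠ a → eval (P b) f = 0

variable {w : σ → M} {P : α → σ → R}

lemma eval_eq_zero_of_mem {f : MvPolynomial σ R} (hf : f ∈ weightedVanishingIdeal w P) (a : α) :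
    eval (P a) f = 0 :=
  have : weightedVanishingIdeal w P ≤ RingHom.ker (eval (P a)) :=
    Ideal.span_le.mpr fun _ hg => hg.2 a
  this hf

lemma rename_mem_weightedVanishingIdeal {w' : τ → N} {Q : β → τ → R} {g : σ → τ} (φ : M →+ N)
    (hw : ∀ s, w' (g s) = φ (w s)) (hQ : ∀ b, ∃ a, Q b ∘ g = P a) {f : MvPolynomial σ R}
    (hf : f ∈ weightedVanishingIdeal w P) : rename g f ∈ weightedVanishingIdeal w' Q := by
  have : weightedVanishingIdeal w P ≤
      (weightedVanishingIdeal w' Q).comap (rename g : MvPolynomial σ R →ₐ[R] _) := by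
    refine Ideal.span_le.mpr fun h ⟨⟨d, hd⟩, hP⟩ =>
      Ideal.subset_span ⟨⟨φ d, isWeightedHomogeneous_rename φ hw hd⟩, fun b => ?_⟩
    obtain ⟨a, ha⟩ := hQ b
    rw [eval_rename, ha, hP a]
  exact this hf

lemma IsSeparator.mul_mem {a : α} {f g : MvPolynomial σ R} {d e : M} (hs : IsSeparator P a f)
    (hf : IsWeightedHomogeneous w f d) (hg : IsWeightedHomogeneous w g e)
    (hga : eval (P a) g = 0) : g * f ∈ weightedVanishingIdeal w P := by
  refine Ideal.subset_span ⟨⟨_, hg.mul hf⟩, fun b => ?_⟩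
  rw [map_mul]
  rcases eq_or_ne b a with rfl | hba
  · rw [hga, zero_mul]
  · rw [hs.2 b hba, mul_zero]

lemma IsSeparator.eval_ne_zero_of_mk_mem_nonZeroDivisors {a : α} {f g : MvPolynomial σ R}
    {d e : M} (hs : IsSeparator P a f) (hf : IsWeightedHomogeneous w f d)
    (hg : IsWeightedHomogeneous w g e)
    (hreg : Ideal.Quotient.mk (weightedVanishingIdeal w P) g ∈ nonZeroDivisors _) :
    eval (P a) g ≠ 0 := by
  intro hga
  have hgf : Ideal.Quotient.mk (weightedVanishingIdeal w P) g * Ideal.Quotient.mk _ f = 0 := by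
    rw [← map_mul, Ideal.Quotient.eq_zero_iff_mem.mpr (hs.mul_mem hf hg hga)]
  exact hs.1 (eval_eq_zero_of_mem (Ideal.Quotient.eq_zero_iff_mem.mp
    ((mul_left_mem_nonZeroDivisors_eq_zero_iff hreg).mp hgf)) a)

lemma eval_sum_pow_separator [Fintype α] {f : α → MvPolynomial σ R}
    (hf : ∀ a, IsSeparator P a (f a)) {k : ℕ} (hk : k ≠ 0) (a : α) :
    eval (P a) (∑ b, f b ^ k) = eval (P a) (f a) ^ k := by
  rw [map_sum, Finset.sum_eq_single_of_mem a (Finset.mem_univ a), map_pow]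
  intro b _ hba
  rw [map_pow, (hf b).2 a hba.symm, zero_pow hk]

lemma exists_separators [IsDomain R] [Finite α] {c : M}
    (h : ∀ a b, a ≠ b → ∃ f, IsWeightedHomogeneous w f c ∧ eval (P a) f ≠ 0 ∧ eval (P b) f = 0) :
    ∃ (d : M) (f : α → MvPolynomial σ R),
      (∀ a, IsWeightedHomogeneous w (f a) d) ∧ ∀ a, IsSeparator P a (f a) := by
  classical
  cases nonempty_fintype α
  choose g homogeneous ne_zero eq_zero using h
  refine ⟨(Fintype.card α - 1) • c,
    fun a => ∏ b : {b // a ≠ b}, g a b b.2, fun a => ?_, fun a => ⟨?_, fun b hba => ?_⟩⟩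
  · have := IsWeightedHomogeneous.prod Finset.univ _ (fun _ => c)
      fun (b : {b // a ≠ b}) _ => homogeneous a b b.2
    simpa [Fintype.card_subtype_compl] using this
  · rw [map_prod]
    exact Finset.prod_ne_zero_iff.mpr fun b _ => ne_zero a b b.2
  · rw [map_prod]
    exact Finset.prod_eq_zero (Finset.mem_univ ⟨b, hba.symm⟩) (eq_zero a b hba.symm)

attribute [local instance] MvPolynomial.weightedGradedAlgebra

lemma isHomogeneous_weightedVanishingIdeal [DecidableEq M] (w : σ → M) (P : α → σ → R) :
    (weightedVanishingIdeal w P).IsHomogeneous (weightedHomogeneousSubmodule R w) :=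
  Ideal.homogeneous_span _ _ fun _ hf => hf.1

lemma mk_mem_nonZeroDivisors_of_eval_ne_zero [IsDomain R] {f : MvPolynomial σ R} {e : M}
    (hf : IsWeightedHomogeneous w f e) (hne : ∀ a, eval (P a) f ≠ 0) :
    Ideal.Quotient.mk (weightedVanishingIdeal w P) f ∈ nonZeroDivisors _ := by
  classical
  refine mk_mem_nonZeroDivisors_of_isHomogeneous (isHomogeneous_weightedVanishingIdeal w P) hf
    fun d g hg hfg => Ideal.subset_span ⟨⟨d, hg⟩, fun a => ?_⟩
  have := eval_eq_zero_of_mem hfg a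
  rw [map_mul] at this
  exact (mul_eq_zero.mp this).resolve_left (hne a)

end VanishingIdeal

section Bigraded

variable {K : Type} [Field K] {m n : ℕ}

lemma bvar_eq (v : Fin (m + n)) :
    bvar m n v = Sum.map Fin.succ Fin.succ (finSumFinEquiv.symm v) := by
  induction v using Fin.addCases <;> simp [bvar, Fin.succ]

/-- Both rows and columns are indexed by `Fin m ⊕ Fin n` instead of `Fin (m + n)`, so that the
Jacobian matrix has an evident block structure. -/
lemma mk_det_jacobian_mem_kdiffB {I : Ideal (BiRing K m n)} {r : ℕ} {H : Fin r → BiRing K m n}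
    (hH : Ideal.span (Set.range H) = I) {P : Fin m ⊕ Fin n → BiRing K m n} (hP : ∀ u, P u ∈ I) :
    Ideal.Quotient.mk I
      (jacobian (fun v => pderiv (Sum.map Fin.succ Fin.succ v)) P).det ∈ kdiffB K I H := by
  have reindex : (jacobian (fun v => pderiv (Sum.map Fin.succ Fin.succ v)) P).det =
      (jacobian (fun v => pderiv (bvar m n v)) (P ∘ finSumFinEquiv.symm)).det := by
    rw [← Matrix.det_submatrix_equiv_self finSumFinEquiv.symm]
    congr 1
    ext u v
    simp [jacobian, bvar_eq]
  rw [reindex]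
  exact map_det_jacobian_mem_span _ (Ideal.Quotient.mk I)
    (fun k => Ideal.Quotient.eq_zero_iff_mem.mpr (hH ▸ Ideal.subset_span ⟨k, rfl⟩))
    fun u => hH ▸ hP _

lemma kdiffExtL_mul_kdiffExtR_le {I : Ideal (BiRing K m n)} {r₁ r₂ r : ℕ}
    {F : Fin r₁ → PRing K m} {G : Fin r₂ → PRing K n} {H : Fin r → BiRing K m n}
    (hF : ∀ k, rename Sum.inl (F k) ∈ I) (hG : ∀ k, rename Sum.inr (G k) ∈ I)
    (hH : Ideal.span (Set.range H) = I) :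
    kdiffExtL K I F * kdiffExtR K I G ≤ kdiffB K I H := by
  rw [kdiffExtL, kdiffExtR, Ideal.span_mul_span', Ideal.span_le]
  rintro _ ⟨_, ⟨ρ, rfl⟩, _, ⟨τ, rfl⟩, rfl⟩
  dsimp only
  rw [← map_mul]
  have minor_mem := mk_det_jacobian_mem_kdiffB hH (P := Sum.elim
    (fun u => rename Sum.inl (F (ρ u))) fun u => rename Sum.inr (G (τ u)))
    (Sum.forall.mpr ⟨fun u => hF (ρ u), fun u => hG (τ u)⟩)
  rwa [det_jacobian_sumElim_rename] at minor_mem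

/-- The bihomogeneous coordinate vectors of the points of `𝕏`, as a family indexed by `𝕏`. -/
def points (𝕏 : Finset (BiPt K m n)) : 𝕏 → Fin (m + 1) ⊕ Fin (n + 1) → K :=
  fun p => Sum.elim p.1.1 p.1.2

variable {𝕏 : Finset (BiPt K m n)}

lemma vIdealB_eq_weightedVanishingIdeal (𝕏 : Finset (BiPt K m n)) :
    vIdealB K 𝕏 = weightedVanishingIdeal (biwt m n) (points 𝕏) := by
  simp [vIdealB, weightedVanishingIdeal, points, IsBihom, evalB]

lemma vIdeal1_eq_weightedVanishingIdeal {N : ℕ} (Y : Finset (Fin (N + 1) → K)) :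
    vIdeal1 K Y = weightedVanishingIdeal (wt1 N) fun q : Y => q.1 := by
  simp [vIdeal1, weightedVanishingIdeal, IsHom1]

lemma biwt_inl (i : Fin (m + 1)) :
    biwt m n (Sum.inl i) = AddMonoidHom.inl ℤ ℤ (wt1 m i) := rfl

lemma biwt_inr (j : Fin (n + 1)) :
    biwt m n (Sum.inr j) = AddMonoidHom.inr ℤ ℤ (wt1 n j) := rfl

lemma rename_inl_mem_vIdealB [DecidableEq K] {f : PRing K m}
    (hf : f ∈ vIdeal1 K (𝕏.image Prod.fst)) : rename Sum.inl f ∈ vIdealB K 𝕏 := by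
  rw [vIdeal1_eq_weightedVanishingIdeal] at hf
  rw [vIdealB_eq_weightedVanishingIdeal]
  exact rename_mem_weightedVanishingIdeal (AddMonoidHom.inl ℤ ℤ) biwt_inl
    (fun p : 𝕏 => ⟨⟨p.1.1, Finset.mem_image_of_mem _ p.2⟩, rfl⟩) hf

lemma rename_inr_mem_vIdealB [DecidableEq K] {f : PRing K n}
    (hf : f ∈ vIdeal1 K (𝕏.image Prod.snd)) : rename Sum.inr f ∈ vIdealB K 𝕏 := by
  rw [vIdeal1_eq_weightedVanishingIdeal] at hf
  rw [vIdealB_eq_weightedVanishingIdeal]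
  exact rename_mem_weightedVanishingIdeal (AddMonoidHom.inr ℤ ℤ) biwt_inr
    (fun p : 𝕏 => ⟨⟨p.1.2, Finset.mem_image_of_mem _ p.2⟩, rfl⟩) hf

lemma isHom1_pointMinor {N : ℕ} (p : Fin (N + 1) → K) (s t : Fin (N + 1)) :
    IsHom1 K (pointMinor p s t) 1 :=
  isWeightedHomogeneous_pointMinor (w := wt1 N) (s := s) (t := t) rfl p

lemma isBihom_rename_mul_rename {f : PRing K m} {g : PRing K n} {d e : ℤ}
    (hf : IsHom1 K f d) (hg : IsHom1 K g e) :
    IsBihom K (rename Sum.inl f * rename Sum.inr g) (d, e) := by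
  have hf' : IsBihom K (rename Sum.inl f : BiRing K m n) (d, 0) :=
    isWeightedHomogeneous_rename _ biwt_inl hf
  have hg' : IsBihom K (rename Sum.inr g : BiRing K m n) (0, e) :=
    isWeightedHomogeneous_rename _ biwt_inr hg
  simpa [IsBihom] using hf'.mul hg'

lemma eval_points_rename_mul_rename (p : 𝕏) (f : PRing K m) (g : PRing K n) :
    eval (points 𝕏 p) (rename Sum.inl f * rename Sum.inr g) = eval p.1.1 f * eval p.1.2 g := by
  rw [map_mul, eval_rename, eval_rename]
  rfl

lemma GoodConfig.exists_bilinear_eval_ne_zero (h𝕏 : GoodConfig K 𝕏) {p q : 𝕏} (hpq : p ≠ q) :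
    ∃ f, IsBihom K f (1, 1) ∧ eval (points 𝕏 p) f ≠ 0 ∧ eval (points 𝕏 q) f = 0 := by
  obtain ⟨ne_zero, fst_eq, snd_eq⟩ := h𝕏
  obtain ⟨hp₁, hp₂⟩ := ne_zero p p.2
  obtain ⟨hq₁, hq₂⟩ := ne_zero q q.2
  by_cases hfst : p.1.1 = q.1.1
  · have hsnd : p.1.2 ≠ q.1.2 := fun h => hpq (Subtype.ext (Prod.ext hfst h))
    obtain ⟨k, hk⟩ := Function.ne_iff.mp hp₁
    obtain ⟨s, t, hst⟩ := exists_eval_pointMinor_ne_zero hp₂ hq₂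
      fun h => hsnd (snd_eq p p.2 q q.2 h)
    refine ⟨rename Sum.inl (X k) * rename Sum.inr (pointMinor q.1.2 s t),
      isBihom_rename_mul_rename (isWeightedHomogeneous_X K (wt1 m) k)
        (isHom1_pointMinor _ _ _), ?_, ?_⟩
    · rw [eval_points_rename_mul_rename, eval_X]
      exact mul_ne_zero hk hst
    · rw [eval_points_rename_mul_rename, eval_pointMinor, mul_comm (q.1.2 t), sub_self, mul_zero]
  · obtain ⟨k, hk⟩ := Function.ne_iff.mp hp₂
    obtain ⟨s, t, hst⟩ := exists_eval_pointMinor_ne_zero hp₁ hq₁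
      fun h => hfst (fst_eq p p.2 q q.2 h)
    refine ⟨rename Sum.inl (pointMinor q.1.1 s t) * rename Sum.inr (X k),
      isBihom_rename_mul_rename (isHom1_pointMinor _ _ _)
        (isWeightedHomogeneous_X K (wt1 n) k), ?_, ?_⟩
    · rw [eval_points_rename_mul_rename, eval_X]
      exact mul_ne_zero hst hk
    · rw [eval_points_rename_mul_rename, eval_pointMinor, mul_comm (q.1.1 t), sub_self, zero_mul]

lemma GoodConfig.exists_separators (h𝕏 : GoodConfig K 𝕏) :
    ∃ (d : ℤ × ℤ) (f : 𝕏 → BiRing K m n),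
      (∀ p, IsBihom K (f p) d) ∧ ∀ p, IsSeparator (points 𝕏) p (f p) :=
  MultiProjPoints.exists_separators fun _ _ hpq => h𝕏.exists_bilinear_eval_ne_zero hpq

lemma GoodConfig.eval_ne_zero_of_mk_mem_nonZeroDivisors (h𝕏 : GoodConfig K 𝕏)
    {g : BiRing K m n} {e : ℤ × ℤ} (hg : IsBihom K g e)
    (hreg : Ideal.Quotient.mk (vIdealB K 𝕏) g ∈ nonZeroDivisors _) (p : 𝕏) :
    eval (points 𝕏 p) g ≠ 0 := by
  obtain ⟨d, f, hf, hsep⟩ := h𝕏.exists_separators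
  rw [vIdealB_eq_weightedVanishingIdeal] at hreg
  exact (hsep p).eval_ne_zero_of_mk_mem_nonZeroDivisors (hf p) hg hreg

lemma ACMxy.fst_apply_zero_ne_zero (h𝕏 : GoodConfig K 𝕏) (hACM : ACMxy K 𝕏) {p : BiPt K m n}
    (hp : p ∈ 𝕏) : p.1 0 ≠ 0 := by
  have := h𝕏.eval_ne_zero_of_mk_mem_nonZeroDivisors
    (isWeightedHomogeneous_X K (biwt m n) (Sum.inl 0))
    (mem_nonZeroDivisors_iff_left.mpr hACM.1) ⟨p, hp⟩
  simpa [points] using this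

lemma ACMxy.snd_apply_zero_ne_zero (h𝕏 : GoodConfig K 𝕏) (hACM : ACMxy K 𝕏) {p : BiPt K m n}
    (hp : p ∈ 𝕏) : p.2 0 ≠ 0 := by
  have homogeneous := isHomogeneous_weightedVanishingIdeal (biwt m n) (points 𝕏)
  rw [← vIdealB_eq_weightedVanishingIdeal] at homogeneous
  have y0_mem : y0B K (vIdealB K 𝕏) ∈ nonZeroDivisors _ :=
    RegPair.mk_mem_nonZeroDivisors homogeneous
      (isWeightedHomogeneous_X K (biwt m n) (Sum.inl 0))
      (isWeightedHomogeneous_X K (biwt m n) (Sum.inr 0)) hACM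
      (φ := AddMonoidHom.fst ℤ ℤ) (by simp [biwt]) (by simp [biwt])
  have := h𝕏.eval_ne_zero_of_mk_mem_nonZeroDivisors
    (isWeightedHomogeneous_X K (biwt m n) (Sum.inr 0)) y0_mem ⟨p, hp⟩
  simpa [points] using this

lemma IsSeparator.mk_pow_mem_kdiffB {p : 𝕏} {f : BiRing K m n} {d : ℤ × ℤ}
    (hs : IsSeparator (points 𝕏) p f) (hf : IsBihom K f d) (hx : p.1.1 0 ≠ 0) (hy : p.1.2 0 ≠ 0)
    {r : ℕ} {H : Fin r → BiRing K m n} (hH : Ideal.span (Set.range H) = vIdealB K 𝕏) :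
    Ideal.Quotient.mk (vIdealB K 𝕏) (f ^ (2 * (m + n))) ∈ kdiffB K (vIdealB K 𝕏) H := by
  let v : Fin m ⊕ Fin n → Fin (m + 1) ⊕ Fin (n + 1) := Sum.map Fin.succ Fin.succ
  let b : Fin m ⊕ Fin n → Fin (m + 1) ⊕ Fin (n + 1) :=
    Sum.elim (fun _ => Sum.inl 0) fun _ => Sum.inr 0
  have v_injective : Function.Injective v :=
    (Fin.succ_injective m).sumMap (Fin.succ_injective n)
  have b_ne_v : ∀ i j, b i ≠ v j := by
    rintro (i | i) (j | j) <;> simp [b, v, (Fin.succ_ne_zero _).symm]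
  have biwt_b : ∀ i, biwt m n (b i) = biwt m n (v i) := by
    rintro (i | i) <;> rfl
  have minor_mul_mem (i) : pointMinor (points 𝕏 p) (v i) (b i) * f ∈ vIdealB K 𝕏 := by
    rw [vIdealB_eq_weightedVanishingIdeal]
    exact hs.mul_mem hf (isWeightedHomogeneous_pointMinor (biwt_b i) _) (by simp [mul_comm])
  have det_mem := mk_det_jacobian_mem_kdiffB hH
    (P := fun i => pointMinor (points 𝕏 p) (v i) (b i) * f ^ 2) fun i => by
      rw [pow_two, ← mul_assoc]
      exact Ideal.mul_mem_right _ _ (minor_mul_mem i)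
  rw [mk_det_jacobian_pointMinor_mul_sq v_injective b_ne_v minor_mul_mem, map_mul] at det_mem
  have coordinates_ne_zero : ∏ i, points 𝕏 p (b i) ≠ 0 :=
    Finset.prod_ne_zero_iff.mpr fun i _ => by rcases i with i | i <;> assumption
  have unit := (coordinates_ne_zero.isUnit.map C).map (Ideal.Quotient.mk (vIdealB K 𝕏))
  simpa using (Ideal.unit_mul_mem_iff_mem _ unit).mp det_mem

lemma GoodConfig.exists_bihom_nonZeroDivisor_mem_kdiffB (h𝕏 : GoodConfig K 𝕏)
    (hx : ∀ p ∈ 𝕏, p.1 0 ≠ 0) (hy : ∀ p ∈ 𝕏, p.2 0 ≠ 0) {r : ℕ} {H : Fin r → BiRing K m n}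
    (hH : Ideal.span (Set.range H) = vIdealB K 𝕏) :
    ∃ f, (∃ d, IsBihom K f d) ∧
      Ideal.Quotient.mk (vIdealB K 𝕏) f ∈ kdiffB K (vIdealB K 𝕏) H ∧
      Ideal.Quotient.mk (vIdealB K 𝕏) f ∈ nonZeroDivisors _ := by
  obtain ⟨d, f, hf, hsep⟩ := h𝕏.exists_separators
  have homogeneous : IsBihom K (∑ p, f p ^ (2 * (m + n) + 1)) ((2 * (m + n) + 1) • d) :=
    IsWeightedHomogeneous.sum _ _ _ fun p _ => (hf p).pow _
  refine ⟨_, ⟨_, homogeneous⟩, ?_, ?_⟩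
  · rw [map_sum]
    refine Ideal.sum_mem _ fun p _ => ?_
    rw [pow_succ, map_mul]
    exact Ideal.mul_mem_right _ _
      ((hsep p).mk_pow_mem_kdiffB (hf p) (hx p p.2) (hy p p.2) hH)
  · rw [vIdealB_eq_weightedVanishingIdeal]
    refine mk_mem_nonZeroDivisors_of_eval_ne_zero homogeneous fun p => ?_
    rw [eval_sum_pow_separator hsep (Nat.succ_ne_zero _)]
    exact pow_ne_zero _ (hsep p).1

end Bigraded

end MultiProjPoints

open MultiProjPoints in
theorem statement_3_general (K : Type) [Field K] [DecidableEq K] (m n : ℕ)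
    (𝕏 : Finset (BiPt K m n)) (hgood : GoodConfig K 𝕏)
    (hx : ∀ p ∈ 𝕏, p.1 0 ≠ 0) (hy : ∀ p ∈ 𝕏, p.2 0 ≠ 0)
    (r₁ : ℕ) (F : Fin r₁ → PRing K m)
    (hFgen : Ideal.span (Set.range F) = vIdeal1 K (𝕏.image Prod.fst))
    (r₂ : ℕ) (G : Fin r₂ → PRing K n)
    (hGgen : Ideal.span (Set.range G) = vIdeal1 K (𝕏.image Prod.snd))
    (r : ℕ) (H : Fin r → BiRing K m n)
    (hHgen : Ideal.span (Set.range H) = vIdealB K 𝕏) :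
    kdiffExtL K (vIdealB K 𝕏) F * kdiffExtR K (vIdealB K 𝕏) G ≤
      kdiffB K (vIdealB K 𝕏) H ∧
    ∃ h ∈ kdiffB K (vIdealB K 𝕏) H,
      (∃ f : BiRing K m n, (∃ d, IsBihom K f d) ∧
        Ideal.Quotient.mk (vIdealB K 𝕏) f = h) ∧
      ∀ z : BiRing K m n ⧸ vIdealB K 𝕏, h * z = 0 → z = 0 := by
  constructor
  · exact kdiffExtL_mul_kdiffExtR_le
      (fun k => rename_inl_mem_vIdealB (hFgen ▸ Ideal.subset_span ⟨k, rfl⟩))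
      (fun k => rename_inr_mem_vIdealB (hGgen ▸ Ideal.subset_span ⟨k, rfl⟩)) hHgen
  · obtain ⟨f, homogeneous, mem, regular⟩ :=
      hgood.exists_bihom_nonZeroDivisor_mem_kdiffB hx hy hHgen
    exact ⟨_, mem, ⟨f, homogeneous, rfl⟩, mem_nonZeroDivisors_iff_left.mp regular⟩

open MultiProjPoints in
/-- Lemma 3.2: for an ACM set `𝕏` of points in `P^m × P^n`,
(a) `ϑ_{𝕏₁}R_𝕏 · ϑ_{𝕏₂}R_𝕏 ⊆ ϑ_𝕏`, and (b) `ϑ_𝕏` contains a bihomogeneous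
non-zerodivisor of `R_𝕏`. -/
theorem statement_3 (K : Type) [Field K] [CharZero K] [DecidableEq K]
    (m n : ℕ) (𝕏 : Finset (BiPt K m n)) (hgood : GoodConfig K 𝕏)
    (hne : 𝕏.Nonempty) (hACM : ACMxy K 𝕏)
    -- a homogeneous system of generators of `I_{𝕏₁}`
    (r₁ : ℕ) (F : Fin r₁ → PRing K m) (hFhom : ∀ k, ∃ d, IsHom1 K (F k) d)
    (hFgen : Ideal.span (Set.range F) = vIdeal1 K (𝕏.image Prod.fst))
    -- a homogeneous system of generators of `I_{𝕏₂}`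
    (r₂ : ℕ) (G : Fin r₂ → PRing K n) (hGhom : ∀ k, ∃ d, IsHom1 K (G k) d)
    (hGgen : Ideal.span (Set.range G) = vIdeal1 K (𝕏.image Prod.snd))
    -- a bihomogeneous system of generators of `I_𝕏`
    (r : ℕ) (H : Fin r → BiRing K m n) (hHhom : ∀ k, ∃ d, IsBihom K (H k) d)
    (hHgen : Ideal.span (Set.range H) = vIdealB K 𝕏) :
    kdiffExtL K (vIdealB K 𝕏) F * kdiffExtR K (vIdealB K 𝕏) G ≤
      kdiffB K (vIdealB K 𝕏) H ∧
    ∃ h ∈ kdiffB K (vIdealB K 𝕏) H,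
      (∃ f : BiRing K m n, (∃ d, IsBihom K f d) ∧
        Ideal.Quotient.mk (vIdealB K 𝕏) f = h) ∧
      ∀ z : BiRing K m n ⧸ vIdealB K 𝕏, h * z = 0 → z = 0 :=
  statement_3_general K m n 𝕏 hgood (fun _ => hACM.fst_apply_zero_ne_zero hgood)
    (fun _ => hACM.snd_apply_zero_ne_zero hgood) r₁ F hFgen r₂ G hGgen r H hHgen
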